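/- Let H = (V, 𝓔) be a finite weighted hypergraph with total weight W. Then there exists a family {x(τ)}_{τ∈[0,1]} where for each τ, x(τ) : V → [0,1] is (together with z_e(τ) = min_{v∈e} x_v(τ)) an optimal solution of the conformal-subgraph LP at coverage parameter ε = 1 − τ, and such that for every vertex v ∈ V the map τ ↦ x_v(τ) is nondecreasing on [0,1]. -/

import Mathlib

open Finset

/-- Total induced weight of hyperedges contained in `K`. -/
noncomputable def inducedWeight {V : Type*} [DecidableEq V]
    (𝓔 : Finset (Finset V)) (w : Finset V → ℝ) (K : Finset V) : ℝ :=
  ∑ e ∈ 𝓔.filter (fun e => e ⊆ K), w e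

/-- Total weight of the hypergraph. -/
noncomputable def totalWeight {V : Type*} [DecidableEq V]
    (𝓔 : Finset (Finset V)) (w : Finset V → ℝ) : ℝ :=
  ∑ e ∈ 𝓔, w e

/-- Feasibility for the conformal-subgraph LP at coverage parameter `ε`. -/
def LPFeasible {V : Type*} [Fintype V] [DecidableEq V]
    (𝓔 : Finset (Finset V)) (w : Finset V → ℝ) (ε : ℝ)
    (x : V → ℝ) (z : Finset V → ℝ) : Prop :=
  (∀ v, x v ∈ Set.Icc (0:ℝ) 1) ∧
  (∀ e ∈ 𝓔, z e ∈ Set.Icc (0:ℝ) 1) ∧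
  (∀ e ∈ 𝓔, ∀ v ∈ e, z e ≤ x v) ∧
  (1 - ε) * totalWeight 𝓔 w ≤ ∑ e ∈ 𝓔, w e * z e

/-- `z_e = min_{v ∈ e} x_v` (with the convention `1` for an empty hyperedge). -/
noncomputable def minOnEdge {V : Type*} (x : V → ℝ) (e : Finset V) : ℝ :=
  if h : e.Nonempty then e.inf' h x else 1

/-!
Charging a price `l` per vertex instead of requiring coverage turns the LP into the maximization of
`S ↦ e(S) - l * |S|` over vertex sets, because a fractional vector is an average of its superlevel
sets (layer cake). If `K ⊆ L` are maximizers at the same price, then, the coverage being concave,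
every point of the segment from the indicator of `K` to that of `L` is optimal for its own coverage
level. Since `e` is supermodular, the price can be lowered from any maximizer `K` until a strictly
larger set `L` becomes a maximizer as well. Starting from `∅`, this produces a chain of sets whose
consecutive segments form a monotone path of optimal solutions.
-/

lemma monotone_ite_le {α β : Type*} [LinearOrder α] [Preorder β] {f g : α → β} {b : α}
    (hf : Monotone f) (hg : Monotone g) (hb : f b ≤ g b) :
    Monotone fun t ↦ if t ≤ b then f t else g t := by
  intro s t hst
  dsimp only
  split_ifs with hs ht ht
  · exact hf hst
  · exact (hf hs).trans (hb.trans (hg (not_le.1 ht).le))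
  · exact absurd (hst.trans ht) hs
  · exact hg hst

section PenalizedMax

variable {V : Type*}

/-- Supermodularity of a real-valued set function: the property of the induced weight that makes
the optimal sets for decreasing prices nested. -/
def Supermodular [DecidableEq V] (f : Finset V → ℝ) : Prop :=
  ∀ S T, f S + f T ≤ f (S ∪ T) + f (S ∩ T)

/-- `K` maximizes `f` when every element costs `l`: it solves the Lagrangian relaxation, with
multiplier `l`, of minimizing the cardinality subject to a lower bound on `f`. -/
def IsPenalizedMax (f : Finset V → ℝ) (l : ℝ) (K : Finset V) : Prop :=
  ∀ S, f S - l * #S ≤ f K - l * #K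

variable {f : Finset V → ℝ} {l l' : ℝ} {K L : Finset V}

lemma exists_pos_isPenalizedMax_empty [Finite V] (f : Finset V → ℝ) :
    ∃ l, 0 < l ∧ IsPenalizedMax f l ∅ := by
  obtain ⟨M, hM⟩ := Finite.exists_max f
  have hlpos : 0 < f M - f ∅ + 1 := by linarith [hM ∅]
  refine ⟨f M - f ∅ + 1, hlpos, fun S ↦ ?_⟩
  rcases S.eq_empty_or_nonempty with rfl | hS
  · exact le_rfl
  · have hcard : (1 : ℝ) ≤ #S := by exact_mod_cast hS.card_pos
    have hcost := le_mul_of_one_le_right hlpos.le hcard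
    simp only [card_empty, Nat.cast_zero, mul_zero, sub_zero]
    linarith [hM S]

lemma IsPenalizedMax.lt_of_ssubset (hL : IsPenalizedMax f l L) (hl : 0 < l) (hKL : K ⊂ L) :
    f K < f L := by
  have hcard : (#K : ℝ) < #L := by exact_mod_cast card_lt_card hKL
  linarith [hL K, mul_lt_mul_of_pos_left hcard hl]

/-- Supermodularity reduces the comparison of `K` with `S` to that with the superset `S ∪ K`, where
`hsup` applies, and the subset `S ∩ K`, which gains less than `K` from the drop in price. -/
lemma IsPenalizedMax.of_forall_superset [DecidableEq V] (hf : Supermodular f)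
    (hK : IsPenalizedMax f l' K) (hl : l ≤ l')
    (hsup : ∀ S, K ⊆ S → f S - l * #S ≤ f K - l * #K) : IsPenalizedMax f l K := by
  intro S
  have hunion := hsup (S ∪ K) subset_union_right
  have hinter : f (S ∩ K) - l * #(S ∩ K) ≤ f K - l * #K := by
    have hcard : (#(S ∩ K) : ℝ) ≤ #K := by exact_mod_cast card_le_card inter_subset_right
    linarith [hK (S ∩ K), mul_le_mul_of_nonneg_left hcard (sub_nonneg.2 hl)]
  have hcard : (#(S ∪ K) : ℝ) + #(S ∩ K) = #S + #K := by
    exact_mod_cast card_union_add_card_inter S K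
  linear_combination hf S K + hunion + hinter + l * hcard

lemma exists_ssubset_max_slope [Fintype V] (f : Finset V → ℝ) (hK : f K < f univ) :
    ∃ L l, K ⊂ L ∧ 0 < l ∧ f L - l * #L = f K - l * #K ∧
      ∀ S, K ⊆ S → f S - l * #S ≤ f K - l * #K := by
  classical
  have hKuniv : K ⊂ univ := ssubset_univ_iff.2 fun h ↦ hK.ne (congrArg f h)
  have hcard {S : Finset V} (hS : K ⊂ S) : (0 : ℝ) < #S - #K :=
    sub_pos.2 (by exact_mod_cast card_lt_card hS)
  obtain ⟨L, hL, hmax⟩ := exists_max_image ({S | K ⊂ S} : Finset (Finset V))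
    (fun S ↦ (f S - f K) / (#S - #K)) ⟨univ, by simpa using hKuniv⟩
  simp only [mem_filter_univ] at hL hmax
  refine ⟨L, (f L - f K) / (#L - #K), hL,
    (div_pos (sub_pos.2 hK) (hcard hKuniv)).trans_le (hmax _ hKuniv), ?_, fun S hS ↦ ?_⟩
  · linear_combination -div_mul_cancel₀ (f L - f K) (hcard hL).ne'
  · rcases hS.eq_or_ssubset with rfl | hS
    · exact le_rfl
    · linear_combination (div_le_iff₀ (hcard hS)).1 (hmax S hS)

theorem IsPenalizedMax.exists_ssubset [Fintype V] [DecidableEq V] (hf : Supermodular f)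
    (hK : IsPenalizedMax f l' K) (hlt : f K < f univ) :
    ∃ L l, K ⊂ L ∧ 0 < l ∧ IsPenalizedMax f l K ∧ IsPenalizedMax f l L := by
  obtain ⟨L, l, hKL, hlpos, htie, hsup⟩ := exists_ssubset_max_slope f hlt
  have hcard : (0 : ℝ) < #L - #K := sub_pos.2 (by exact_mod_cast card_lt_card hKL)
  have hl : l ≤ l' := le_of_mul_le_mul_right (by linarith [hK L]) hcard
  have hKl := hK.of_forall_superset hf hl hsup
  exact ⟨L, l, hKL, hlpos, hKl, fun S ↦ (hKl S).trans htie.ge⟩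

end PenalizedMax

section Threshold

open MeasureTheory

lemma intervalIntegrable_ite_le (a c : ℝ) :
    IntervalIntegrable (fun θ ↦ if θ ≤ a then c else 0) volume 0 1 := by
  have hanti : Antitone fun θ : ℝ ↦ if θ ≤ a then (1 : ℝ) else 0 := fun θ₁ θ₂ h ↦ by
    dsimp only
    split_ifs <;> linarith
  simpa using hanti.intervalIntegrable.mul_const c

lemma integral_ite_le {a : ℝ} (ha : a ∈ Set.Icc 0 1) (c : ℝ) :
    ∫ θ in (0 : ℝ)..1, (if θ ≤ a then c else 0) = c * a := by
  simpa [Set.indicator_apply, mul_comm] using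
    intervalIntegral.integral_indicator (f := fun _ : ℝ ↦ c) (μ := volume) ha

variable {ι : Type*} (s : Finset ι) (c : ι → ℝ) {a : ι → ℝ}

lemma intervalIntegrable_sum_filter_le (a : ι → ℝ) :
    IntervalIntegrable (fun θ ↦ ∑ i ∈ s with θ ≤ a i, c i) volume 0 1 := by
  simpa only [sum_filter, sum_fn] using
    IntervalIntegrable.sum s fun i _ ↦ intervalIntegrable_ite_le (a i) (c i)

lemma integral_sum_filter_le (ha : ∀ i ∈ s, a i ∈ Set.Icc 0 1) :
    ∫ θ in (0 : ℝ)..1, ∑ i ∈ s with θ ≤ a i, c i = ∑ i ∈ s, c i * a i := by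
  simp only [sum_filter]
  rw [intervalIntegral.integral_finsetSum fun i _ ↦ intervalIntegrable_ite_le (a i) (c i)]
  exact sum_congr rfl fun i hi ↦ integral_ite_le (ha i hi) (c i)

end Threshold

section MinOnEdge

variable {V : Type*} {x y : V → ℝ} {e : Finset V} {θ : ℝ}

lemma le_minOnEdge_iff (hθ : θ ≤ 1) : θ ≤ minOnEdge x e ↔ ∀ v ∈ e, θ ≤ x v := by
  rcases e.eq_empty_or_nonempty with rfl | he
  · simpa [minOnEdge] using hθ
  · simp [minOnEdge, he]

lemma minOnEdge_le {v : V} (hv : v ∈ e) : minOnEdge x e ≤ x v := by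
  rw [minOnEdge, dif_pos ⟨v, hv⟩]
  exact inf'_le x hv

lemma minOnEdge_mono (h : x ≤ y) : minOnEdge x e ≤ minOnEdge y e := by
  rcases e.eq_empty_or_nonempty with rfl | he
  · simp [minOnEdge]
  · simpa [minOnEdge, he] using fun v hv ↦ ⟨v, hv, h v⟩

lemma minOnEdge_mem_Icc (hx : x ∈ Set.Icc 0 1) : minOnEdge x e ∈ Set.Icc 0 1 := by
  refine ⟨(le_minOnEdge_iff zero_le_one).2 fun v _ ↦ hx.1 v, ?_⟩
  rcases e.eq_empty_or_nonempty with rfl | ⟨v, hv⟩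
  · simp [minOnEdge]
  · exact (minOnEdge_le hv).trans (hx.2 v)

lemma indicator_one_mem_Icc (s : Set V) : s.indicator (1 : V → ℝ) ∈ Set.Icc 0 1 :=
  ⟨Set.indicator_nonneg fun _ _ ↦ zero_le_one, Set.indicator_le_self' fun _ _ ↦ zero_le_one⟩

lemma minOnEdge_indicator [DecidableEq V] (K : Finset V) :
    minOnEdge ((K : Set V).indicator 1) e = if e ⊆ K then 1 else 0 := by
  have hmem := minOnEdge_mem_Icc (e := e) (indicator_one_mem_Icc (K : Set V))
  split_ifs with h
  · exact hmem.2.antisymm ((le_minOnEdge_iff le_rfl).2 fun v hv ↦ by simp [h hv])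
  · obtain ⟨v, hve, hvK⟩ := not_subset.1 h
    exact ((minOnEdge_le hve).trans_eq (by simp [hvK])).antisymm hmem.1

lemma concaveOn_minOnEdge (e : Finset V) :
    ConcaveOn ℝ Set.univ fun x : V → ℝ ↦ minOnEdge x e := by
  refine ⟨convex_univ, fun x _ y _ a b ha hb hab ↦ ?_⟩
  rcases e.eq_empty_or_nonempty with rfl | he
  · simp [minOnEdge, hab]
  · have hmin : minOnEdge (a • x + b • y) e = e.inf' he (a • x + b • y) := dif_pos he
    refine (le_inf' he _ fun v hv ↦ ?_).trans_eq hmin.symm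
    exact add_le_add (mul_le_mul_of_nonneg_left (minOnEdge_le hv) ha)
      (mul_le_mul_of_nonneg_left (minOnEdge_le hv) hb)

end MinOnEdge

section Coverage

variable {V : Type*} {𝓔 : Finset (Finset V)} {w : Finset V → ℝ} {x y : V → ℝ}

/-- The weight covered by a fractional vertex vector `x`, i.e. the largest value of `∑ w_e z_e`
over the edge variables `z` allowed by `x`; it extends the induced weight from sets to vectors. -/
noncomputable def coverage (𝓔 : Finset (Finset V)) (w : Finset V → ℝ) (x : V → ℝ) : ℝ :=
  ∑ e ∈ 𝓔, w e * minOnEdge x e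

lemma coverage_mono (hw : ∀ e ∈ 𝓔, 0 ≤ w e) (h : x ≤ y) : coverage 𝓔 w x ≤ coverage 𝓔 w y :=
  sum_le_sum fun e he ↦ mul_le_mul_of_nonneg_left (minOnEdge_mono h) (hw e he)

lemma concaveOn_coverage (hw : ∀ e ∈ 𝓔, 0 ≤ w e) : ConcaveOn ℝ Set.univ (coverage 𝓔 w) := by
  refine ⟨convex_univ, fun x _ y _ a b ha hb hab ↦ ?_⟩
  calc a • coverage 𝓔 w x + b • coverage 𝓔 w y
      = ∑ e ∈ 𝓔, w e * (a • minOnEdge x e + b • minOnEdge y e) := by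
        simp only [coverage, smul_eq_mul, mul_sum, ← sum_add_distrib]
        exact sum_congr rfl fun e _ ↦ by ring
    _ ≤ coverage 𝓔 w (a • x + b • y) := sum_le_sum fun e he ↦
        mul_le_mul_of_nonneg_left ((concaveOn_minOnEdge e).2 trivial trivial ha hb hab) (hw e he)

variable [DecidableEq V]

lemma coverage_indicator (K : Finset V) :
    coverage 𝓔 w ((K : Set V).indicator 1) = inducedWeight 𝓔 w K := by
  simp [coverage, inducedWeight, minOnEdge_indicator, sum_filter]

lemma inducedWeight_univ [Fintype V] : inducedWeight 𝓔 w univ = totalWeight 𝓔 w := by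
  simp [inducedWeight, totalWeight]

lemma inducedWeight_mono (hw : ∀ e ∈ 𝓔, 0 ≤ w e) : Monotone (inducedWeight 𝓔 w) :=
  fun _ _ h ↦ sum_le_sum_of_subset_of_nonneg
    (monotone_filter_right _ fun _ _ he ↦ he.trans h) fun e he _ ↦ hw e (mem_filter.1 he).1

lemma supermodular_inducedWeight (hw : ∀ e ∈ 𝓔, 0 ≤ w e) :
    Supermodular (inducedWeight 𝓔 w) := by
  intro S T
  simp only [inducedWeight, sum_filter, ← sum_add_distrib]
  refine sum_le_sum fun e he ↦ ?_
  have hS : e ⊆ S → e ⊆ S ∪ T := fun h ↦ h.trans subset_union_left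
  have hT : e ⊆ T → e ⊆ S ∪ T := fun h ↦ h.trans subset_union_right
  have hwe := hw e he
  simp only [subset_inter_iff]
  split_ifs <;> first | linarith | tauto

variable [Fintype V]

lemma inducedWeight_superlevel {θ : ℝ} (hθ : θ ≤ 1) (x : V → ℝ) :
    inducedWeight 𝓔 w {v | θ ≤ x v} = ∑ e ∈ 𝓔 with θ ≤ minOnEdge x e, w e := by
  simp [inducedWeight, le_minOnEdge_iff hθ, subset_iff]

/-- Integrating the bound for the superlevel sets `{v | θ ≤ x v}` over `θ ∈ [0, 1]`. -/
theorem IsPenalizedMax.coverage_sub_le {l : ℝ} {K : Finset V}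
    (hK : IsPenalizedMax (inducedWeight 𝓔 w) l K) (hx : x ∈ Set.Icc 0 1) :
    coverage 𝓔 w x - l * ∑ v, x v ≤ inducedWeight 𝓔 w K - l * #K := by
  have hedge := intervalIntegrable_sum_filter_le 𝓔 w (minOnEdge x)
  have hvertex := intervalIntegrable_sum_filter_le univ (fun _ ↦ l) x
  calc coverage 𝓔 w x - l * ∑ v, x v
      = ∫ θ in (0 : ℝ)..1,
          ((∑ e ∈ 𝓔 with θ ≤ minOnEdge x e, w e) - ∑ v with θ ≤ x v, l) := by
        rw [intervalIntegral.integral_sub hedge hvertex,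
          integral_sum_filter_le _ _ fun e _ ↦ minOnEdge_mem_Icc hx,
          integral_sum_filter_le _ _ fun v _ ↦ ⟨hx.1 v, hx.2 v⟩, coverage, mul_sum]
    _ ≤ ∫ _ in (0 : ℝ)..1, (inducedWeight 𝓔 w K - l * #K) := by
        refine intervalIntegral.integral_mono_on zero_le_one (hedge.sub hvertex) (by simp)
          fun θ hθ ↦ ?_
        rw [← inducedWeight_superlevel hθ.2, sum_const, nsmul_eq_mul, mul_comm]
        exact hK _
    _ = inducedWeight 𝓔 w K - l * #K := by simp

end Coverage

section OptimalCover

open AffineMap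

variable {V : Type*} {𝓔 : Finset (Finset V)} {w : Finset V → ℝ} {x : V → ℝ}

/-- The fractional vertex vectors covering weight at least `t`: the feasible region of the LP after
the edge variables have been eliminated. -/
def fractionalCovers (𝓔 : Finset (Finset V)) (w : Finset V → ℝ) (t : ℝ) : Set (V → ℝ) :=
  {x | x ∈ Set.Icc 0 1 ∧ t ≤ coverage 𝓔 w x}

lemma fractionalCovers_max_inducedWeight_empty [DecidableEq V] (hw : ∀ e ∈ 𝓔, 0 ≤ w e) (t : ℝ) :
    fractionalCovers 𝓔 w (max t (inducedWeight 𝓔 w ∅)) = fractionalCovers 𝓔 w t := by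
  ext x
  refine and_congr_right fun hx ↦ max_le_iff.trans (and_iff_left ?_)
  rw [← coverage_indicator, coe_empty, Set.indicator_empty]
  exact coverage_mono hw hx.1

variable [Fintype V]

/-- `x` is an optimal solution of the LP, after elimination of the edge variables, with required
coverage `t`. -/
def IsOptimalCover (𝓔 : Finset (Finset V)) (w : Finset V → ℝ) (t : ℝ) (x : V → ℝ) : Prop :=
  x ∈ fractionalCovers 𝓔 w t ∧ IsMinOn (fun y ↦ ∑ v, y v) (fractionalCovers 𝓔 w t) x

lemma sum_lineMap_indicator (K L : Finset V) (s : ℝ) :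
    ∑ v, lineMap ((K : Set V).indicator (1 : V → ℝ)) ((L : Set V).indicator 1) s v =
      lineMap (#K : ℝ) (#L : ℝ) s := by
  classical
  simp only [lineMap_apply_module, Pi.add_apply, Pi.smul_apply, sum_add_distrib, ← smul_sum]
  simp [Set.indicator_apply]

variable [DecidableEq V] {l : ℝ} {K L : Finset V}

lemma lpFeasible_minOnEdge {τ : ℝ} (hx : x ∈ fractionalCovers 𝓔 w (τ * totalWeight 𝓔 w)) :
    LPFeasible 𝓔 w (1 - τ) x (minOnEdge x) :=
  ⟨fun v ↦ ⟨hx.1.1 v, hx.1.2 v⟩, fun _ _ ↦ minOnEdge_mem_Icc hx.1,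
    fun _ _ _ ↦ minOnEdge_le, by simpa only [sub_sub_cancel, coverage] using hx.2⟩

lemma LPFeasible.mem_fractionalCovers (hw : ∀ e ∈ 𝓔, 0 ≤ w e) {ε : ℝ} {z : Finset V → ℝ}
    (h : LPFeasible 𝓔 w ε x z) : x ∈ fractionalCovers 𝓔 w ((1 - ε) * totalWeight 𝓔 w) := by
  obtain ⟨hx, hz, hzx, hcover⟩ := h
  refine ⟨⟨fun v ↦ (hx v).1, fun v ↦ (hx v).2⟩, hcover.trans (sum_le_sum fun e he ↦ ?_)⟩
  exact mul_le_mul_of_nonneg_left ((le_minOnEdge_iff (hz e he).2).2 (hzx e he)) (hw e he)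

theorem isOptimalCover_lineMap (hw : ∀ e ∈ 𝓔, 0 ≤ w e) (hl : 0 < l)
    (hK : IsPenalizedMax (inducedWeight 𝓔 w) l K) (hL : IsPenalizedMax (inducedWeight 𝓔 w) l L)
    {s : ℝ} (hs : s ∈ Set.Icc 0 1) :
    IsOptimalCover 𝓔 w (lineMap (inducedWeight 𝓔 w K) (inducedWeight 𝓔 w L) s)
      (lineMap ((K : Set V).indicator 1) ((L : Set V).indicator 1) s) := by
  have hs' : 0 ≤ 1 - s := sub_nonneg.2 hs.2
  refine ⟨⟨(convex_Icc 0 1).lineMap_mem (indicator_one_mem_Icc _) (indicator_one_mem_Icc _) hs, ?_⟩,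
    isMinOn_iff.2 fun y hy ↦ ?_⟩
  · rw [← coverage_indicator, ← coverage_indicator, lineMap_apply_module, lineMap_apply_module]
    exact (concaveOn_coverage hw).2 trivial trivial hs' hs.1 (sub_add_cancel 1 s)
  · obtain ⟨hycube, hycover⟩ := hy
    have hyK := mul_le_mul_of_nonneg_left (hK.coverage_sub_le hycube) hs'
    have hyL := mul_le_mul_of_nonneg_left (hL.coverage_sub_le hycube) hs.1
    rw [lineMap_apply_module, smul_eq_mul, smul_eq_mul] at hycover
    rw [sum_lineMap_indicator, lineMap_apply_module, smul_eq_mul, smul_eq_mul]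
    refine le_of_mul_le_mul_left ?_ hl
    linear_combination hyK + hyL + hycover

end OptimalCover

section OptimalPath

open AffineMap

variable {V : Type*} [Fintype V] [DecidableEq V] {𝓔 : Finset (Finset V)} {w : Finset V → ℝ}
  {l : ℝ} {K L : Finset V}

/-- `x` is a monotone path of optimal covers, parametrized by the required coverage, from the vertex
set `K` up to full coverage. Monotonicity is imposed on all of `ℝ`, also outside the relevant
coverage levels, so that paths can be concatenated without tracking intervals. -/
structure IsOptimalPathFrom (𝓔 : Finset (Finset V)) (w : Finset V → ℝ) (K : Finset V)
    (x : ℝ → V → ℝ) : Prop where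
  monotone : Monotone x
  start : x (inducedWeight 𝓔 w K) = (K : Set V).indicator 1
  isOptimalCover : ∀ t ∈ Set.Icc (inducedWeight 𝓔 w K) (totalWeight 𝓔 w),
    IsOptimalCover 𝓔 w t (x t)

lemma IsPenalizedMax.isOptimalPathFrom_const (hw : ∀ e ∈ 𝓔, 0 ≤ w e) (hl : 0 < l)
    (hK : IsPenalizedMax (inducedWeight 𝓔 w) l K)
    (hfull : inducedWeight 𝓔 w K = totalWeight 𝓔 w) :
    IsOptimalPathFrom 𝓔 w K fun _ ↦ (K : Set V).indicator 1 where
  monotone := monotone_const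
  start := rfl
  isOptimalCover t ht := by
    obtain rfl : t = inducedWeight 𝓔 w K := (ht.2.trans_eq hfull.symm).antisymm ht.1
    simpa using isOptimalCover_lineMap hw hl hK hK (Set.left_mem_Icc.2 zero_le_one)

lemma IsPenalizedMax.exists_optimal_segment (hw : ∀ e ∈ 𝓔, 0 ≤ w e) (hl : 0 < l) (hKL : K ⊂ L)
    (hK : IsPenalizedMax (inducedWeight 𝓔 w) l K) (hL : IsPenalizedMax (inducedWeight 𝓔 w) l L) :
    ∃ p : ℝ → V → ℝ, Monotone p ∧ p (inducedWeight 𝓔 w K) = (K : Set V).indicator 1 ∧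
      p (inducedWeight 𝓔 w L) = (L : Set V).indicator 1 ∧
      ∀ t ∈ Set.Icc (inducedWeight 𝓔 w K) (inducedWeight 𝓔 w L), IsOptimalCover 𝓔 w t (p t) := by
  have hlt : 0 < inducedWeight 𝓔 w L - inducedWeight 𝓔 w K :=
    sub_pos.2 (hL.lt_of_ssubset hl hKL)
  let s : ℝ → ℝ := fun t ↦
    (t - inducedWeight 𝓔 w K) / (inducedWeight 𝓔 w L - inducedWeight 𝓔 w K)
  have hs_mono : Monotone s := fun _ _ h ↦
    div_le_div_of_nonneg_right (sub_le_sub_right h _) hlt.le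
  have hsK : s (inducedWeight 𝓔 w K) = 0 := by simp [s]
  have hsL : s (inducedWeight 𝓔 w L) = 1 := div_self hlt.ne'
  have hind : (K : Set V).indicator (1 : V → ℝ) ≤ (L : Set V).indicator 1 :=
    Set.indicator_le_indicator_of_subset (coe_subset.2 hKL.subset) fun _ ↦ zero_le_one
  refine ⟨lineMap ((K : Set V).indicator 1) ((L : Set V).indicator 1) ∘ s,
    (lineMap_mono hind).comp hs_mono, by simp [hsK], by simp [hsL], fun t ht ↦ ?_⟩
  have hst : s t ∈ Set.Icc 0 1 := ⟨hsK.ge.trans (hs_mono ht.1), (hs_mono ht.2).trans hsL.le⟩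
  have hlevel : lineMap (inducedWeight 𝓔 w K) (inducedWeight 𝓔 w L) (s t) = t := by
    rw [lineMap_apply_ring', div_mul_cancel₀ _ hlt.ne', sub_add_cancel]
  simpa only [Function.comp_apply, hlevel] using isOptimalCover_lineMap hw hl hK hL hst

lemma IsOptimalPathFrom.concat {p y : ℝ → V → ℝ} (hy : IsOptimalPathFrom 𝓔 w L y)
    (hle : inducedWeight 𝓔 w K ≤ inducedWeight 𝓔 w L) (hp : Monotone p)
    (hpK : p (inducedWeight 𝓔 w K) = (K : Set V).indicator 1)
    (hpL : p (inducedWeight 𝓔 w L) = (L : Set V).indicator 1)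
    (hopt : ∀ t ∈ Set.Icc (inducedWeight 𝓔 w K) (inducedWeight 𝓔 w L),
      IsOptimalCover 𝓔 w t (p t)) :
    IsOptimalPathFrom 𝓔 w K fun t ↦ if t ≤ inducedWeight 𝓔 w L then p t else y t where
  monotone := monotone_ite_le hp hy.monotone (hpL.trans hy.start.symm).le
  start := (if_pos hle).trans hpK
  isOptimalCover t ht := by
    split_ifs with htL
    · exact hopt t ⟨ht.1, htL⟩
    · exact hy.isOptimalCover t ⟨(not_le.1 htL).le, ht.2⟩

theorem IsPenalizedMax.exists_isOptimalPathFrom (hw : ∀ e ∈ 𝓔, 0 ≤ w e) (hl : 0 < l)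
    (hK : IsPenalizedMax (inducedWeight 𝓔 w) l K) : ∃ x, IsOptimalPathFrom 𝓔 w K x := by
  induction K using WellFoundedGT.induction generalizing l with
  | ind K ih =>
    rcases (inducedWeight_mono hw (subset_univ K)).eq_or_lt with hfull | hlt
    · exact ⟨_, hK.isOptimalPathFrom_const hw hl (hfull.trans inducedWeight_univ)⟩
    · obtain ⟨L, l, hKL, hl, hKl, hLl⟩ := hK.exists_ssubset (supermodular_inducedWeight hw) hlt
      obtain ⟨y, hy⟩ := ih L hKL hl hLl
      obtain ⟨p, hp, hpK, hpL, hopt⟩ := hKl.exists_optimal_segment hw hl hKL hLl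
      exact ⟨_, hy.concat (inducedWeight_mono hw hKL.subset) hp hpK hpL hopt⟩

end OptimalPath

/-- monotone family of optimal LP solutions: there is a family
`{x(τ)}_{τ ∈ [0,1]}` of optimal LP solutions (with `z_e = min_{v∈e} x_v`) at
coverage parameter `ε = 1 - τ`, such that every coordinate `τ ↦ x_v(τ)` is
nondecreasing on `[0,1]`. -/
theorem monotone_optimal_lp_family {V : Type*} [Fintype V] [DecidableEq V]
    (𝓔 : Finset (Finset V)) (w : Finset V → ℝ) (hw : ∀ e ∈ 𝓔, 0 ≤ w e) :
    ∃ x : ℝ → V → ℝ,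
      (∀ τ ∈ Set.Icc (0:ℝ) 1,
        LPFeasible 𝓔 w (1 - τ) (x τ) (minOnEdge (x τ)) ∧
        ∀ (x' : V → ℝ) (z' : Finset V → ℝ),
          LPFeasible 𝓔 w (1 - τ) x' z' → ∑ v, x τ v ≤ ∑ v, x' v) ∧
      (∀ v : V, ∀ τ₁ ∈ Set.Icc (0:ℝ) 1, ∀ τ₂ ∈ Set.Icc (0:ℝ) 1,
        τ₁ ≤ τ₂ → x τ₁ v ≤ x τ₂ v) := by
  have hW : 0 ≤ totalWeight 𝓔 w := sum_nonneg hw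
  obtain ⟨l, hl, hempty⟩ := exists_pos_isPenalizedMax_empty (inducedWeight 𝓔 w)
  obtain ⟨x, hx⟩ := hempty.exists_isOptimalPathFrom hw hl
  -- Levels below the weight of the empty hyperedge are covered for free.
  let level : ℝ → ℝ := fun τ ↦ max (τ * totalWeight 𝓔 w) (inducedWeight 𝓔 w ∅)
  have hlevel_mono : Monotone level := fun τ₁ τ₂ h ↦
    max_le_max_right _ (mul_le_mul_of_nonneg_right h hW)
  refine ⟨x ∘ level, fun τ hτ ↦ ?_, fun v τ₁ _ τ₂ _ h ↦ hx.monotone (hlevel_mono h) v⟩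
  have hlevel : level τ ≤ totalWeight 𝓔 w := max_le (mul_le_of_le_one_left hW hτ.2)
    ((inducedWeight_mono hw (empty_subset univ)).trans_eq inducedWeight_univ)
  obtain ⟨hcover, hmin⟩ := hx.isOptimalCover (level τ) ⟨le_max_right _ _, hlevel⟩
  rw [fractionalCovers_max_inducedWeight_empty hw] at hcover hmin
  refine ⟨lpFeasible_minOnEdge hcover, fun x' z' h ↦ hmin ?_⟩
  simpa only [sub_sub_cancel] using h.mem_fractionalCovers hw
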